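/- Let G be a group acting k-acylindrically and without edge inversions on a simplicial tree T, where k is a nonnegative integer. Let h1, h2 ∈ G be hyperbolic elements with Axis(h1) ≠ Axis(h2) and diam(Axis(h1) ∩ Axis(h2)) ≤ 3k. Then for every integer q ≥ 3k+1 the elements h1^q and h2^q freely generate a rank 2 free subgroup of G. -/

import Mathlib

/-!
Each `hᵢ` translates a line `fᵢ : ℤ → V` contained in its axis by `τ(hᵢ)`. Let `πᵢ v` be the
parameter of the point of `fᵢ` nearest to `v`; then `πᵢ (hᵢ • v) = πᵢ v + τ(hᵢ)`. A walk along which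
`πᵢ` changes must pass through the line `fᵢ`. Hence the shadow of one line on the other (its image
under the projection) either is a point or lies in the intersection of the lines, so its diameter is
at most that of `Axis h₁ ∩ Axis h₂`; moreover every vertex projects into the shadow on at least one
of the lines. If powers of the `hᵢ` translate by more than this diameter, the sets of vertices
projecting before and after the shadows are ping-pong sets.
-/

open SimpleGraph Pointwise

section TreeDefs

variable {G : Type*} [Group G]

/-- The action of `G` on the vertices preserves adjacency. -/
def ActsByAut (G : Type*) [Group G] {V : Type*} [MulAction G V] (T : SimpleGraph V) : Prop :=
  ∀ (g : G) (v w : V), T.Adj v w → T.Adj (g • v) (g • w)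

/-- The action has no edge inversions: no element swaps the endpoints of an edge. -/
def NoEdgeInversion (G : Type*) [Group G] {V : Type*} [MulAction G V] (T : SimpleGraph V) : Prop :=
  ∀ (g : G) (v w : V), T.Adj v w → ¬(g • v = w ∧ g • w = v)

/-- The set of vertices fixed by `g`. -/
def Fixed (V : Type*) [MulAction G V] (g : G) : Set V := {v | g • v = v}

/-- `g` is elliptic: it fixes some vertex. -/
def IsElliptic (V : Type*) [MulAction G V] (g : G) : Prop := ∃ v : V, g • v = v

/-- `g` is hyperbolic: it fixes no vertex. -/
def IsHyperbolic (V : Type*) [MulAction G V] (g : G) : Prop := ¬ ∃ v : V, g • v = v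

/-- Translation length of `g`: the infimum of `d(v, g • v)` over all vertices `v`. -/
noncomputable def transLen {V : Type*} [MulAction G V] (T : SimpleGraph V) (g : G) : ℕ :=
  ⨅ v : V, T.dist v (g • v)

/-- The axis of a (hyperbolic) element: the vertices moved exactly the translation length. -/
noncomputable def Axis {V : Type*} [MulAction G V] (T : SimpleGraph V) (g : G) : Set V :=
  {v | T.dist v (g • v) = transLen T g}

/-- Diameter (in `ℕ∞`) of a set of vertices: the sup of pairwise simplicial distances. -/
noncomputable def setDiam {V : Type*} (T : SimpleGraph V) (S : Set V) : ℕ∞ :=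
  ⨆ v ∈ S, ⨆ w ∈ S, (T.dist v w : ℕ∞)

/-- Minimal simplicial distance between two sets of vertices. -/
noncomputable def setDist {V : Type*} (T : SimpleGraph V) (A B : Set V) : ℕ :=
  sInf {n : ℕ | ∃ v ∈ A, ∃ w ∈ B, T.dist v w = n}

/-- The action of `G` on `T` is `k`-acylindrical: the fixed-point set of every nontrivial
elliptic element has diameter at most `k`. -/
def AcylindricalAction {V : Type*} (T : SimpleGraph V) (G : Type*) [Group G] [MulAction G V]
    (k : ℕ) : Prop :=
  ∀ g : G, g ≠ 1 → IsElliptic V g → setDiam T (Fixed V g) ≤ (k : ℕ∞)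

/-- `a` and `b` generate a rank 2 free product in `G`: the canonical homomorphism
`⟨a⟩ ∗ ⟨b⟩ → G` from the free product of the cyclic subgroups generated by `a` and `b`
is injective. -/
def IsRank2FreeProduct {G : Type*} [Group G] (a b : G) : Prop :=
  Function.Injective
    (Monoid.Coprod.lift (Subgroup.zpowers a).subtype (Subgroup.zpowers b).subtype)

/-- `a` and `b` freely generate a rank 2 free subgroup of `G`: the homomorphism from the
free group on two generators sending the generators to `a` and `b` is injective. -/
def FreelyGeneratesFreeSubgroup {G : Type*} [Group G] (a b : G) : Prop :=
  Function.Injective ((FreeGroup.lift (fun i : Bool => if i then a else b)) : FreeGroup Bool →* G)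

/-- `a` and `b` freely generate a rank 2 free subsemigroup of `G`: the monoid homomorphism
from the free monoid on two generators sending the generators to `a` and `b` is injective. -/
def FreelyGeneratesFreeSubsemigroup {G : Type*} [Monoid G] (a b : G) : Prop :=
  Function.Injective ((FreeMonoid.lift (fun i : Bool => if i then a else b)) : FreeMonoid Bool →* G)

/-- A line in a simplicial tree: the image of an isometric embedding of `ℤ`. -/
def IsLine {V : Type*} (T : SimpleGraph V) (L : Set V) : Prop :=
  ∃ f : ℤ → V, (∀ m n : ℤ, T.dist (f m) (f n) = (m - n).natAbs) ∧ L = Set.range f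

end TreeDefs

universe u v

lemma exists_forall_mem_Ico_of_forall_sub_lt {ι : Type*} [Nonempty ι] {x : ι → ℤ} {N : ℤ}
    (hx : ∀ i j, x j - x i < N) : ∃ m : ℤ, ∀ i, x i ∈ Set.Ico m (m + N) := by
  have hbdd : BddBelow (Set.range x) := by
    obtain ⟨i⟩ := ‹Nonempty ι›
    refine ⟨x i - N, ?_⟩
    rintro _ ⟨j, rfl⟩
    linarith [hx j i]
  obtain ⟨i, hi⟩ := Int.csInf_mem (Set.range_nonempty x) hbdd
  refine ⟨x i, fun j => ⟨?_, by linarith [hx i j]⟩⟩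
  rw [hi]
  exact csInf_le hbdd ⟨j, rfl⟩

section PingPong

variable {ι : Type v} {G : Type max u v} [Group G] {V : Type*} [MulAction G V]

theorem injective_lift_of_translated_coordinates [Nontrivial ι] (a : ι → G) (π : ι → V → ℤ)
    (m : ι → ℤ) (N : ι → ℕ) (hsmul : ∀ i x, π i (a i • x) = π i x + N i)
    (hsurj : ∀ i, Function.Surjective (π i))
    (hstrip : ∀ i j, i ≠ j → ∀ x,
      π i x ∈ Set.Ico (m i) (m i + N i) ∨ π j x ∈ Set.Ico (m j) (m j + N j)) :
    Function.Injective (FreeGroup.lift a) := by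
  have hsmul_inv : ∀ i x, π i ((a i)⁻¹ • x) = π i x - N i := fun i x => by
    rw [eq_sub_iff_add_eq, ← hsmul, smul_inv_smul]
  -- Mathlib's ping-pong lemma needs the index type in the universe of the group.
  let b : ULift.{u} ι → G := fun i => a i.down
  have hinj : Function.Injective (FreeGroup.lift b) := by
    refine FreeGroup.injective_lift_of_ping_pong b
      (fun i => {x | m i.down + N i.down ≤ π i.down x}) (fun i => {x | π i.down x < m i.down})
      (fun i => ?_) (fun i j hij => ?_) (fun i j hij => ?_) (fun i j => ?_) (fun i => ?_)
      (fun i => ?_)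
    · obtain ⟨x, hx⟩ := hsurj i.down (m i.down + N i.down)
      exact ⟨x, hx.ge⟩
    · refine Set.disjoint_left.2 fun x hi hj => ?_
      grind [hstrip i.down j.down (ULift.down_injective.ne hij) x]
    · refine Set.disjoint_left.2 fun x hi hj => ?_
      grind [hstrip i.down j.down (ULift.down_injective.ne hij) x]
    · refine Set.disjoint_left.2 fun x hi hj => ?_
      rcases eq_or_ne i j with rfl | hij
      · grind
      · grind [hstrip i.down j.down (ULift.down_injective.ne hij) x]
    · rintro _ ⟨x, hx, rfl⟩
      change m i.down + N i.down ≤ π i.down (a i.down • x)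
      have hx' : m i.down ≤ π i.down x := not_lt.1 hx
      linarith [hsmul i.down x]
    · rintro _ ⟨x, hx, rfl⟩
      change π i.down ((a i.down)⁻¹ • x) < m i.down
      have hx' : π i.down x < m i.down + N i.down := not_le.1 hx
      linarith [hsmul_inv i.down x]
  have hlift : FreeGroup.lift a =
      (FreeGroup.lift b).comp (FreeGroup.freeGroupCongr Equiv.ulift.symm).toMonoidHom := by
    ext i
    simp [b]
  rw [hlift, MonoidHom.coe_comp]
  exact hinj.comp (MulEquiv.injective _)

end PingPong

section Distance

variable {V : Type*} {T : SimpleGraph V}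

lemma exists_adj_dist_eq_dist_add_one {v u : V} (h : T.dist v u ≠ 0) :
    ∃ w, T.Adj u w ∧ T.dist v u = T.dist v w + 1 := by
  obtain ⟨p, hp⟩ := SimpleGraph.exists_walk_of_dist_ne_zero (T.dist_comm (u := v) ▸ h)
  cases p with
  | nil => simp at h
  | @cons _ w _ huw p =>
    refine ⟨w, huw, le_antisymm ?_ ?_⟩
    · simpa [SimpleGraph.dist_eq_one_iff_adj.2 huw.symm] using
        huw.symm.reachable.dist_triangle_right v
    · rw [T.dist_comm, T.dist_comm (u := v), ← hp, Walk.length_cons]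
      exact Nat.succ_le_succ (dist_le p)

lemma dist_le_of_forall_adj_succ {f : ℤ → V} (hf : ∀ n, T.Adj (f n) (f (n + 1))) (m : ℤ) (n : ℕ) :
    T.dist (f m) (f (m + n)) ≤ n := by
  induction n with
  | zero => simp
  | succ n ih =>
    have hadj := hf (m + n)
    have htri := hadj.reachable.dist_triangle_right (f m)
    rw [SimpleGraph.dist_eq_one_iff_adj.2 hadj] at htri
    push_cast
    rw [← add_assoc]
    exact htri.trans (Nat.succ_le_succ ih)

lemma eq_of_adj_of_dist_eq_dist_add_one (hT : T.IsTree) {v u w w' : V} (hw : T.Adj u w)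
    (hw' : T.Adj u w') (h : T.dist v u = T.dist v w + 1) (h' : T.dist v u = T.dist v w' + 1) :
    w = w' := by
  obtain ⟨p, hp⟩ := hT.connected.exists_walk_length_eq_dist v w
  obtain ⟨p', hp'⟩ := hT.connected.exists_walk_length_eq_dist v w'
  have hpath : (p.concat hw.symm).IsPath :=
    Walk.isPath_of_length_eq_dist _ (by rw [Walk.length_concat, hp, h])
  have hpath' : (p'.concat hw'.symm).IsPath :=
    Walk.isPath_of_length_eq_dist _ (by rw [Walk.length_concat, hp', h'])
  have heq : p.concat hw.symm = p'.concat hw'.symm :=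
    congrArg Subtype.val ((hT.isAcyclic.subsingleton_path v u).elim ⟨_, hpath⟩ ⟨_, hpath'⟩)
  simpa using congrArg Walk.penultimate heq

lemma setDiam_mono {S S' : Set V} (h : S ⊆ S') : setDiam T S ≤ setDiam T S' :=
  iSup₂_le fun v hv => iSup₂_le fun w hw =>
    le_iSup₂_of_le v (h hv) (le_iSup₂_of_le w (h hw) le_rfl)

lemma dist_le_setDiam {S : Set V} {v w : V} (hv : v ∈ S) (hw : w ∈ S) :
    (T.dist v w : ℕ∞) ≤ setDiam T S :=
  le_iSup₂_of_le v hv (le_iSup₂_of_le w hw le_rfl)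

end Distance

section Lines

variable {V : Type*} {T : SimpleGraph V} {f f' : ℤ → V} {π π' : V → ℤ}

/-- A bi-infinite walk without backtracking. In a tree it traverses a line, but unlike an isometric
embedding of `ℤ` it is recognised locally. -/
structure IsNonbacktracking (T : SimpleGraph V) (f : ℤ → V) : Prop where
  adj : ∀ n, T.Adj (f n) (f (n + 1))
  ne : ∀ n, f n ≠ f (n + 2)

/-- `π v` is the parameter of the nearest-point projection of `v` to the line `f`: the geodesics
from `v` to the line enter it at `f (π v)`. Applied to the vertices of `f`, this equation also says
that `f` is an isometric embedding. -/
def IsLineProj (T : SimpleGraph V) (f : ℤ → V) (π : V → ℤ) : Prop :=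
  ∀ v n, (T.dist v (f n) : ℤ) = T.dist v (f (π v)) + |n - π v|

namespace IsNonbacktracking

lemma comp_neg (hf : IsNonbacktracking T f) : IsNonbacktracking T fun n => f (-n) where
  adj n := by simpa using (hf.adj (-(n + 1))).symm
  ne n := by simpa using (hf.ne (-(n + 2))).symm

lemma dist_eq_dist_add_natCast (hT : T.IsTree) (hf : IsNonbacktracking T f) {v : V} {m : ℤ}
    (hm : T.dist v (f m) ≤ T.dist v (f (m + 1))) (n : ℕ) :
    T.dist v (f (m + n)) = T.dist v (f m) + n := by
  have hstep : ∀ k, T.dist v (f k) ≤ T.dist v (f (k + 1)) →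
      T.dist v (f (k + 1)) = T.dist v (f k) + 1 := fun k hk =>
    (hT.dist_eq_dist_add_one_of_adj v (hf.adj k)).resolve_left (by omega)
  -- Once the walk moves away from `v` it never turns back: parents in a tree are unique.
  have hmono : ∀ n : ℕ, T.dist v (f (m + n)) ≤ T.dist v (f (m + n + 1)) := by
    intro n
    induction n with
    | zero => simpa using hm
    | succ n ih =>
      by_contra! hlt
      push_cast at hlt
      rw [← add_assoc] at hlt
      have hdown := (hT.dist_eq_dist_add_one_of_adj v (hf.adj (m + n + 1))).resolve_right
        (by omega)
      refine hf.ne (m + n) ?_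
      rw [eq_of_adj_of_dist_eq_dist_add_one hT (hf.adj (m + n)).symm (hf.adj (m + n + 1))
        (hstep _ ih) hdown, add_assoc _ 1 1, one_add_one_eq_two]
  induction n with
  | zero => simp
  | succ n ih =>
    push_cast
    rw [← add_assoc m, hstep _ (hmono n), ih, add_assoc]

lemma exists_isLineProj (hT : T.IsTree) (hf : IsNonbacktracking T f) : ∃ π, IsLineProj T f π := by
  suffices h : ∀ v, ∃ p : ℤ, ∀ n, (T.dist v (f n) : ℤ) = T.dist v (f p) + |n - p| by
    choose π hπ using h
    exact ⟨π, hπ⟩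
  intro v
  obtain ⟨p, hp⟩ : ∃ p, ∀ n, T.dist v (f p) ≤ T.dist v (f n) :=
    ⟨Function.argmin fun n => T.dist v (f n), fun n =>
      Function.argmin_le (fun n => T.dist v (f n)) n⟩
  refine ⟨p, fun n => ?_⟩
  obtain ⟨k, rfl | rfl⟩ : ∃ k : ℕ, n = p + k ∨ n = p - k :=
    ⟨(n - p).natAbs, by omega⟩
  · simp [hf.dist_eq_dist_add_natCast hT (hp (p + 1)) k]
  · have h := hf.comp_neg.dist_eq_dist_add_natCast hT (v := v) (m := -p) (by simpa using hp _) k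
    simp only [neg_add, neg_neg, ← sub_eq_add_neg] at h
    simp [h]

end IsNonbacktracking

namespace IsLineProj

lemma eq_of_forall_dist (hπ : IsLineProj T f π) {v : V} {p : ℤ}
    (hp : ∀ n, (T.dist v (f n) : ℤ) = T.dist v (f p) + |n - p|) : π v = p := by
  have habs : |π v - p| = 0 := by
    linarith [hπ v p, hp (π v), abs_sub_comm p (π v), abs_nonneg (π v - p)]
  exact sub_eq_zero.1 (abs_eq_zero.1 habs)

lemma apply_line (hπ : IsLineProj T f π) (n : ℤ) : π (f n) = n := by
  have h := hπ (f n) n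
  rw [SimpleGraph.dist_self, Nat.cast_zero] at h
  have habs : |n - π (f n)| = 0 := by linarith [abs_nonneg (n - π (f n))]
  exact (sub_eq_zero.1 (abs_eq_zero.1 habs)).symm

lemma surjective (hπ : IsLineProj T f π) : Function.Surjective π := fun n => ⟨f n, hπ.apply_line n⟩

lemma dist_line (hπ : IsLineProj T f π) (m n : ℤ) : (T.dist (f m) (f n) : ℤ) = |n - m| := by
  simpa [hπ.apply_line] using hπ (f m) n

lemma eq_of_adj_of_ne (hT : T.IsTree) (hπ : IsLineProj T f π) {u w : V} (huw : T.Adj u w)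
    (hne : π u ≠ π w) : u = f (π u) := by
  by_contra hu
  have hstep := hT.dist_eq_dist_add_one_of_adj (f (π u)) huw
  have hstep' := hT.dist_eq_dist_add_one_of_adj (f (π w)) huw
  have hdist := hπ u (π w)
  have hdist' := hπ w (π u)
  have hpos : T.dist (f (π u)) u ≠ 0 := (hT.connected.pos_dist_of_ne (Ne.symm hu)).ne'
  obtain ⟨x, hux, hx⟩ := exists_adj_dist_eq_dist_add_one hpos
  have hstepx := hT.dist_eq_dist_add_one_of_adj (f (π w)) hux
  have htri := hT.connected.dist_triangle (u := f (π w)) (v := f (π u)) (w := x)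
  have hline := hπ.dist_line (π w) (π u)
  rw [T.dist_comm] at hdist hdist'
  rw [T.dist_comm (u := u)] at hdist
  rw [T.dist_comm (u := w)] at hdist'
  -- Both `w` and the neighbour `x` of `u` towards `f (π u)` are closer to `f (π w)` than `u`.
  have hwx : w = x :=
    eq_of_adj_of_dist_eq_dist_add_one hT (v := f (π w)) huw hux (by grind) (by grind)
  grind

lemma mem_support_of_ne (hT : T.IsTree) (hπ : IsLineProj T f π) {v w : V} (p : T.Walk v w)
    (hne : π v ≠ π w) : f (π v) ∈ p.support := by
  induction p with
  | nil => exact absurd rfl hne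
  | @cons v u w hvu p ih =>
    by_cases hvu' : π v = π u
    · rw [hvu'] at hne ⊢
      exact List.mem_cons_of_mem _ (ih hne)
    · rw [← hπ.eq_of_adj_of_ne hT hvu hvu']
      exact Walk.start_mem_support _

lemma dist_add_dist_of_ne (hT : T.IsTree) (hπ : IsLineProj T f π) {v w : V} (hne : π v ≠ π w) :
    T.dist v (f (π v)) + T.dist (f (π v)) w = T.dist v w := by
  classical
  obtain ⟨p, hp⟩ := hT.connected.exists_walk_length_eq_dist v w
  have hmem := hπ.mem_support_of_ne hT p hne
  refine le_antisymm ?_ hT.connected.dist_triangle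
  rw [← hp, ← congrArg Walk.length (p.take_spec hmem), Walk.length_append]
  exact add_le_add (dist_le _) (dist_le _)

lemma mem_range_of_dist_add_dist (hT : T.IsTree) (hπ : IsLineProj T f π) {m n : ℤ} {y : V}
    (hy : T.dist (f m) y + T.dist y (f n) = T.dist (f m) (f n)) : y ∈ Set.range f := by
  refine ⟨π y, Eq.symm <| hT.connected.dist_eq_zero_iff.1 ?_⟩
  rw [T.dist_comm] at hy
  grind [hπ y m, hπ y n, hπ.dist_line m n]

lemma line_apply_mem_range (hT : T.IsTree) (hπ : IsLineProj T f π) (hπ' : IsLineProj T f' π')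
    {m n : ℤ} (hne : π (f' m) ≠ π (f' n)) : f (π (f' m)) ∈ Set.range f' :=
  hπ'.mem_range_of_dist_add_dist hT (hπ.dist_add_dist_of_ne hT hne)

lemma exists_forall_apply_mem_Ico (hT : T.IsTree) (hπ : IsLineProj T f π)
    (hπ' : IsLineProj T f' π') {N : ℕ} (hN : setDiam T (Set.range f ∩ Set.range f') < N) :
    ∃ m : ℤ, ∀ n, π (f' n) ∈ Set.Ico m (m + N) := by
  refine exists_forall_mem_Ico_of_forall_sub_lt fun i j => ?_
  by_cases hne : π (f' i) = π (f' j)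
  · have hpos : (0 : ℕ∞) < N := bot_le.trans_lt hN
    rw [hne, sub_self]
    exact_mod_cast hpos
  · have hmem : f (π (f' i)) ∈ Set.range f ∩ Set.range f' :=
      ⟨⟨_, rfl⟩, hπ.line_apply_mem_range hT hπ' hne⟩
    have hmem' : f (π (f' j)) ∈ Set.range f ∩ Set.range f' :=
      ⟨⟨_, rfl⟩, hπ.line_apply_mem_range hT hπ' (Ne.symm hne)⟩
    have hlt : T.dist (f (π (f' i))) (f (π (f' j))) < N := by
      exact_mod_cast (dist_le_setDiam hmem hmem').trans_lt hN
    calc π (f' j) - π (f' i) ≤ |π (f' j) - π (f' i)| := le_abs_self _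
      _ = T.dist (f (π (f' i))) (f (π (f' j))) := (hπ.dist_line _ _).symm
      _ < N := by exact_mod_cast hlt

lemma apply_eq_of_dist_add_dist (hT : T.IsTree) (hπ : IsLineProj T f π) {v y : V}
    (hy : T.dist v y + T.dist y (f (π v)) = T.dist v (f (π v))) : π y = π v := by
  have htri := hT.connected.dist_triangle (u := v) (v := y) (w := f (π y))
  grind [hπ v (π y), hπ y (π v)]

lemma mem_range_or_mem_range (hT : T.IsTree) (hπ : IsLineProj T f π) (hπ' : IsLineProj T f' π')
    (v : V) : π v ∈ Set.range (π ∘ f') ∨ π' v ∈ Set.range (π' ∘ f) := by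
  by_cases h : π v = π (f' (π' v))
  · exact Or.inl ⟨π' v, h.symm⟩
  -- The geodesic from `v` to `f'` passes through `f (π v)`, which thus has the same projection.
  · exact Or.inr ⟨π v, hπ'.apply_eq_of_dist_add_dist hT (hπ.dist_add_dist_of_ne hT h)⟩

end IsLineProj

end Lines

section Actions

variable {G : Type*} [Group G] {V : Type*} [MulAction G V] {T : SimpleGraph V}

lemma ActsByAut.dist_smul_smul (hAct : ActsByAut G T) (g : G) (v w : V) :
    T.dist (g • v) (g • w) = T.dist v w := by
  have hle : ∀ (g : G) (v w : V), T.edist (g • v) (g • w) ≤ T.edist v w := fun g v w =>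
    le_iInf fun p => by
      let φ : T →g T := ⟨fun x => g • x, fun {x y} hxy => hAct g x y hxy⟩
      exact (edist_le (p.map φ)).trans_eq (by rw [Walk.length_map])
  have heq : T.edist (g • v) (g • w) = T.edist v w :=
    (hle g v w).antisymm (by simpa using hle g⁻¹ (g • v) (g • w))
  rw [SimpleGraph.dist, SimpleGraph.dist, heq]

lemma IsLineProj.apply_smul (hAct : ActsByAut G T) {f : ℤ → V} {π : V → ℤ}
    (hπ : IsLineProj T f π) {g : G} {t : ℤ} (hg : ∀ n, g • f n = f (n + t)) (v : V) :
    π (g • v) = π v + t := by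
  have hdist : ∀ n, T.dist (g • v) (f (n + t)) = T.dist v (f n) := fun n => by
    rw [← hg, hAct.dist_smul_smul]
  refine hπ.eq_of_forall_dist fun n => ?_
  rw [← sub_add_cancel n t, hdist, hdist, hπ v, add_sub_add_right_eq_sub]

lemma pow_smul_eq_add_mul {g : G} {f : ℤ → V} {t : ℤ} (hg : ∀ n, g • f n = f (n + t)) (q : ℕ)
    (n : ℤ) : g ^ q • f n = f (n + q * t) := by
  induction q with
  | zero => simp
  | succ q ih =>
    rw [pow_succ', mul_smul, ih, hg]
    congr 1
    push_cast
    ring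

lemma transLen_le_dist_smul (T : SimpleGraph V) (g : G) (v : V) :
    transLen T g ≤ T.dist v (g • v) :=
  Nat.sInf_le ⟨v, rfl⟩

lemma exists_dist_smul_eq_transLen [Nonempty V] (T : SimpleGraph V) (g : G) :
    ∃ v, T.dist v (g • v) = transLen T g :=
  Nat.sInf_mem (Set.range_nonempty fun v => T.dist v (g • v))

lemma IsHyperbolic.transLen_pos (hT : T.Connected) {g : G} (hg : IsHyperbolic V g) :
    0 < transLen T g := by
  have := hT.nonempty
  obtain ⟨v, hv⟩ := exists_dist_smul_eq_transLen T g
  rw [← hv]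
  exact hT.pos_dist_of_ne fun h => hg ⟨v, h.symm⟩

end Actions

section Axes

variable {G : Type*} [Group G] {V : Type*} [MulAction G V] {T : SimpleGraph V} {g : G} {v : V}

/-- The bi-infinite concatenation of the translates of a walk from `v` to `g • v` under the powers
of `g`. -/
def unrolledWalk (g : G) (p : T.Walk v (g • v)) (n : ℤ) : V :=
  g ^ (n / p.length) • p.getVert (n % p.length).toNat

lemma unrolledWalk_add_length (p : T.Walk v (g • v)) (hp : 0 < p.length) (n : ℤ) :
    g • unrolledWalk g p n = unrolledWalk g p (n + p.length) := by
  have hp' : (p.length : ℤ) ≠ 0 := by exact_mod_cast hp.ne'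
  rw [unrolledWalk, unrolledWalk, Int.add_emod_right, Int.add_ediv_of_dvd_right dvd_rfl,
    Int.ediv_self hp', smul_smul, ← zpow_one_add, add_comm]

lemma unrolledWalk_mul_add (p : T.Walk v (g • v)) (hp : 0 < p.length) (a : ℤ) {i : ℕ}
    (hi : i ≤ p.length) : unrolledWalk g p (a * p.length + i) = g ^ a • p.getVert i := by
  have hlt : ∀ (a : ℤ) {i : ℕ}, i < p.length →
      unrolledWalk g p (a * p.length + i) = g ^ a • p.getVert i := fun a i hi => by
    have hp' : (p.length : ℤ) ≠ 0 := by exact_mod_cast hp.ne'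
    have hdiv : (i : ℤ) / p.length = 0 := Int.ediv_eq_zero_of_lt (by omega) (by omega)
    have hmod : (i : ℤ) % p.length = i := Int.emod_eq_of_lt (by omega) (by omega)
    rw [unrolledWalk, add_comm, Int.add_mul_ediv_right _ _ hp', Int.add_mul_emod_self_right, hdiv,
      hmod, zero_add, Int.toNat_natCast]
  rcases hi.lt_or_eq with hi | rfl
  · exact hlt a hi
  · have h := hlt (a + 1) hp
    rw [Walk.getVert_zero, zpow_add_one, mul_smul] at h
    rw [Walk.getVert_length, ← h]
    congr 1
    push_cast
    ring

lemma unrolledWalk_adj (hAct : ActsByAut G T) (p : T.Walk v (g • v)) (hp : 0 < p.length) (n : ℤ) :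
    T.Adj (unrolledWalk g p n) (unrolledWalk g p (n + 1)) := by
  obtain ⟨a, i, hi, rfl⟩ : ∃ (a : ℤ) (i : ℕ), i < p.length ∧ n = a * p.length + i := by
    have hnonneg := Int.emod_nonneg n (b := p.length) (by omega)
    have hlt := Int.emod_lt_of_pos n (b := p.length) (by omega)
    refine ⟨n / p.length, (n % p.length).toNat, by omega, ?_⟩
    rw [Int.toNat_of_nonneg hnonneg, Int.ediv_mul_add_emod]
  rw [unrolledWalk_mul_add p hp a hi.le, add_assoc, ← Nat.cast_add_one,
    unrolledWalk_mul_add p hp a hi]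
  exact hAct _ _ _ (p.adj_getVert_succ hi)

section TranslatedWalk

variable {f : ℤ → V}

lemma dist_add_transLen (hf : ∀ n, T.Adj (f n) (f (n + 1)))
    (hg : ∀ n, g • f n = f (n + transLen T g)) (n : ℤ) :
    T.dist (f n) (f (n + transLen T g)) = transLen T g :=
  (dist_le_of_forall_adj_succ hf n _).antisymm (hg n ▸ transLen_le_dist_smul T g (f n))

lemma range_subset_axis (hf : ∀ n, T.Adj (f n) (f (n + 1)))
    (hg : ∀ n, g • f n = f (n + transLen T g)) : Set.range f ⊆ Axis T g := by
  rintro _ ⟨n, rfl⟩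
  rw [Axis, Set.mem_ofPred_eq, hg, dist_add_transLen hf hg]

lemma isNonbacktracking_of_smul_eq_add_transLen (hT : T.Connected) (hNoInv : NoEdgeInversion G T)
    (hg : IsHyperbolic V g) (hf : ∀ n, T.Adj (f n) (f (n + 1)))
    (hgf : ∀ n, g • f n = f (n + transLen T g)) : IsNonbacktracking T f := by
  refine ⟨hf, fun n hback => ?_⟩
  rcases (Nat.succ_le_of_lt (hg.transLen_pos hT)).eq_or_lt with hone | htwo
  · simp only [← hone, Nat.succ_eq_add_one, zero_add, Nat.cast_one] at hgf
    exact hNoInv g (f n) (f (n + 1)) (hf n)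
      ⟨hgf n, by rw [hgf, add_assoc, one_add_one_eq_two, ← hback]⟩
  -- Backtracking at `n` would leave a shortcut of length `τ(g) - 2` from `f n` to `g • f n`.
  · obtain ⟨t, ht⟩ := Nat.exists_eq_add_of_le' htwo
    have hdist := dist_add_transLen hf hgf n
    have hle := dist_le_of_forall_adj_succ hf (n + 2) t
    have hend : n + (transLen T g : ℤ) = n + 2 + t := by omega
    rw [hend, hback] at hdist
    omega

end TranslatedWalk

theorem IsHyperbolic.exists_translated_line (hT : T.Connected) (hAct : ActsByAut G T)
    (hNoInv : NoEdgeInversion G T) (hg : IsHyperbolic V g) :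
    ∃ f : ℤ → V, IsNonbacktracking T f ∧ (∀ n, g • f n = f (n + transLen T g)) ∧
      Set.range f ⊆ Axis T g := by
  have := hT.nonempty
  obtain ⟨v, hv⟩ := exists_dist_smul_eq_transLen T g
  obtain ⟨p, hp⟩ := hT.exists_walk_length_eq_dist v (g • v)
  rw [hv] at hp
  have hpos : 0 < p.length := hp ▸ hg.transLen_pos hT
  have hadj := unrolledWalk_adj hAct p hpos
  have hsmul := hp ▸ unrolledWalk_add_length p hpos
  exact ⟨unrolledWalk g p, isNonbacktracking_of_smul_eq_add_transLen hT hNoInv hg hadj hsmul, hsmul,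
    range_subset_axis hadj hsmul⟩

end Axes

theorem statement2_general {G V : Type*} [Group G] [MulAction G V] (T : SimpleGraph V)
    (hT : T.IsTree) (hAct : ActsByAut G T) (hNoInv : NoEdgeInversion G T)
    (h1 h2 : G) (hh1 : IsHyperbolic V h1) (hh2 : IsHyperbolic V h2) (q1 q2 : ℕ)
    (hq1 : setDiam T (Axis T h1 ∩ Axis T h2) < (q1 * transLen T h1 : ℕ))
    (hq2 : setDiam T (Axis T h1 ∩ Axis T h2) < (q2 * transLen T h2 : ℕ)) :
    FreelyGeneratesFreeSubgroup (h1 ^ q1) (h2 ^ q2) := by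
  obtain ⟨f₁, hf₁, hsmul₁, haxis₁⟩ := hh1.exists_translated_line hT.connected hAct hNoInv
  obtain ⟨f₂, hf₂, hsmul₂, haxis₂⟩ := hh2.exists_translated_line hT.connected hAct hNoInv
  obtain ⟨π₁, hπ₁⟩ := hf₁.exists_isLineProj hT
  obtain ⟨π₂, hπ₂⟩ := hf₂.exists_isLineProj hT
  have hdiam := setDiam_mono (T := T) (Set.inter_subset_inter haxis₁ haxis₂)
  obtain ⟨m₁, hm₁⟩ := hπ₁.exists_forall_apply_mem_Ico hT hπ₂ (hdiam.trans_lt hq1)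
  obtain ⟨m₂, hm₂⟩ := hπ₂.exists_forall_apply_mem_Ico hT hπ₁
    (Set.inter_comm (Set.range f₁) _ ▸ hdiam.trans_lt hq2)
  have hstrip (x : V) : π₁ x ∈ Set.Ico m₁ (m₁ + (q1 * transLen T h1 : ℕ)) ∨
      π₂ x ∈ Set.Ico m₂ (m₂ + (q2 * transLen T h2 : ℕ)) :=
    (hπ₁.mem_range_or_mem_range hT hπ₂ x).imp
      (fun ⟨n, hn⟩ => hn ▸ hm₁ n) (fun ⟨n, hn⟩ => hn ▸ hm₂ n)
  have hπsmul₁ := hπ₁.apply_smul hAct (pow_smul_eq_add_mul hsmul₁ q1)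
  have hπsmul₂ := hπ₂.apply_smul hAct (pow_smul_eq_add_mul hsmul₂ q2)
  refine injective_lift_of_translated_coordinates _ (fun i => if i then π₁ else π₂)
    (fun i => if i then m₁ else m₂)
    (fun i => if i then q1 * transLen T h1 else q2 * transLen T h2) ?_ ?_ ?_
  · simpa using ⟨hπsmul₂, hπsmul₁⟩
  · simpa using ⟨hπ₂.surjective, hπ₁.surjective⟩
  · simpa using ⟨fun x => (hstrip x).symm, hstrip⟩

/-- If `G` acts `k`-acylindrically without edge inversions on a simplicial
tree, `h1, h2` are hyperbolic with distinct axes and the intersection of the axes has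
diameter at most `3k`, then for every `q ≥ 3k + 1` the elements `h1^q` and `h2^q` freely
generate a rank 2 free subgroup of `G`. -/
theorem statement2 {G V : Type*} [Group G] [MulAction G V] (T : SimpleGraph V)
    (hT : T.IsTree) (hAct : ActsByAut G T) (hNoInv : NoEdgeInversion G T)
    (k : ℕ) (hAcyl : AcylindricalAction T G k)
    (h1 h2 : G) (hh1 : IsHyperbolic V h1) (hh2 : IsHyperbolic V h2)
    (haxes : Axis T h1 ≠ Axis T h2)
    (hdiam : setDiam T (Axis T h1 ∩ Axis T h2) ≤ ((3 * k : ℕ) : ℕ∞))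
    (q : ℕ) (hq : 3 * k + 1 ≤ q) :
    FreelyGeneratesFreeSubgroup (h1 ^ q) (h2 ^ q) := by
  have hlt {g : G} (hg : IsHyperbolic V g) := hdiam.trans_lt <| Nat.cast_lt.2 <|
    hq.trans (Nat.le_mul_of_pos_right q (hg.transLen_pos hT.connected))
  exact statement2_general T hT hAct hNoInv h1 h2 hh1 hh2 q q (hlt hh1) (hlt hh2)
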